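/- Pointwise state separation under nesting: for every x ∈ (0, 1/2) the sequence n ↦ gⁿ(x) is strictly decreasing and converges to 0, and for every x ∈ (1/2, 1) it is strictly increasing and converges to 1, while gⁿ(1/2) = 1/2 for all n. Hence the nested maps gⁿ converge pointwise on [0,1] to the function equal to 0 on [0,1/2), 1/2 at 1/2, and 1 on (1/2,1]. -/

import Mathlib

/-!
Since `g x = (1 - cos (π x)) / 2`, the inequality `g x < x` on `(0, 1/2)` says
`1 - 2 x < cos (π x) = sin (π/2 - π x)`, which is Jordan's inequality (strict concavity of the
sine on `[0, π/2]`). So `(0, 1/2)` is invariant and each orbit in it is strictly decreasing and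
bounded below; its limit is a fixed point of the continuous map `g` in `[0, 1/2)`, and the only one
is `0`. The orbits in `(1/2, 1)` follow from the reflection symmetry `g (1 - x) = 1 - g x`.
-/

open Real Filter

/-- The SSB map `g(x) = sin(πx/2)²`. -/
noncomputable def g : ℝ → ℝ := fun x => Real.sin (π * x / 2) ^ 2

lemma g_eq_cos (x : ℝ) : g x = (1 - Real.cos (π * x)) / 2 := by
  have h := Real.cos_sq_add_sin_sq (π * x / 2)
  have h2 := Real.cos_two_mul (π * x / 2)
  rw [show 2 * (π * x / 2) = π * x by ring] at h2
  simp only [g]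
  linarith

lemma g_one_sub (x : ℝ) : g (1 - x) = 1 - g x := by
  rw [g_eq_cos, g_eq_cos, show π * (1 - x) = π - π * x by ring, Real.cos_pi_sub]
  ring

lemma g_iterate_one_sub (n : ℕ) (x : ℝ) : g^[n] (1 - x) = 1 - g^[n] x :=
  ((show Function.Semiconj (fun y : ℝ => 1 - y) g g from
    fun y => (g_one_sub y).symm).iterate_right n x).symm

lemma g_zero : g 0 = 0 := by simp [g]

lemma g_half : g (1 / 2) = 1 / 2 := by
  have h := g_one_sub (1 / 2)
  norm_num at h ⊢
  linarith

lemma continuous_g : Continuous g := by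
  unfold g
  fun_prop

/-- Jordan's inequality `2 y / π < sin y` at `y = π/2 - π x`. -/
lemma g_lt_self {x : ℝ} (hx : x ∈ Set.Ioo (0 : ℝ) (1 / 2)) : g x < x := by
  obtain ⟨h0, h1⟩ := hx
  have hpi := Real.pi_pos
  have h := Real.mul_lt_sin (x := π / 2 - π * x) (by nlinarith) (by nlinarith)
  rw [Real.sin_pi_div_two_sub,
    show 2 / π * (π / 2 - π * x) = 1 - 2 * x by field_simp] at h
  rw [g_eq_cos]
  linarith

lemma g_mem_Ioo {x : ℝ} (hx : x ∈ Set.Ioo (0 : ℝ) (1 / 2)) : g x ∈ Set.Ioo (0 : ℝ) (1 / 2) := by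
  refine ⟨?_, (g_lt_self hx).trans hx.2⟩
  obtain ⟨h0, h1⟩ := hx
  have hpi := Real.pi_pos
  exact pow_pos (Real.sin_pos_of_pos_of_lt_pi (by positivity) (by nlinarith)) 2

lemma g_iterate_mem_Ioo {x : ℝ} (hx : x ∈ Set.Ioo (0 : ℝ) (1 / 2)) (n : ℕ) :
    g^[n] x ∈ Set.Ioo (0 : ℝ) (1 / 2) :=
  Set.MapsTo.iterate (fun _ => g_mem_Ioo) n hx

lemma strictAnti_g_iterate {x : ℝ} (hx : x ∈ Set.Ioo (0 : ℝ) (1 / 2)) :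
    StrictAnti (fun n : ℕ => g^[n] x) :=
  strictAnti_nat_of_succ_lt fun n => by
    rw [Function.iterate_succ_apply']
    exact g_lt_self (g_iterate_mem_Ioo hx n)

lemma tendsto_g_iterate_zero {x : ℝ} (hx : x ∈ Set.Ioo (0 : ℝ) (1 / 2)) :
    Tendsto (fun n : ℕ => g^[n] x) atTop (nhds 0) := by
  have hanti := (strictAnti_g_iterate hx).antitone
  have hbdd : BddBelow (Set.range fun n : ℕ => g^[n] x) :=
    ⟨0, by rintro _ ⟨n, rfl⟩; exact (g_iterate_mem_Ioo hx n).1.le⟩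
  have hlim := tendsto_atTop_ciInf hanti hbdd
  set l := ⨅ n : ℕ, g^[n] x
  have hfix : g l = l := isFixedPt_of_tendsto_iterate hlim continuous_g.continuousAt
  have hl0 : 0 ≤ l := le_ciInf fun n => (g_iterate_mem_Ioo hx n).1.le
  have hlx : l ≤ x := ciInf_le hbdd 0
  rcases hl0.eq_or_lt with h | h
  · rwa [← h] at hlim
  · exact absurd hfix (g_lt_self ⟨h, hlx.trans_lt hx.2⟩).ne

lemma strictMono_g_iterate {x : ℝ} (hx : x ∈ Set.Ioo (1 / 2 : ℝ) 1) :
    StrictMono (fun n : ℕ => g^[n] x) := by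
  intro m n hmn
  have h := strictAnti_g_iterate (x := 1 - x) ⟨by linarith [hx.2], by linarith [hx.1]⟩ hmn
  simp only [g_iterate_one_sub] at h
  simpa using h

lemma tendsto_g_iterate_one {x : ℝ} (hx : x ∈ Set.Ioo (1 / 2 : ℝ) 1) :
    Tendsto (fun n : ℕ => g^[n] x) atTop (nhds 1) := by
  have h := tendsto_g_iterate_zero (x := 1 - x) ⟨by linarith [hx.2], by linarith [hx.1]⟩
  simp only [g_iterate_one_sub] at h
  simpa using h.const_sub 1

/-- Pointwise state separation under nesting: for `x ∈ (0,1/2)` the sequence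
`n ↦ g^[n] x` is strictly decreasing to `0`, for `x ∈ (1/2,1)` it is strictly
increasing to `1`, and `g^[n] (1/2) = 1/2` for all `n`. Hence on `[0,1]` the
nested maps converge pointwise to the step function equal to `0` on `[0,1/2)`,
`1/2` at `1/2`, and `1` on `(1/2,1]`. -/
theorem ssb_map_nesting_state_separation :
    (∀ x ∈ Set.Ioo (0:ℝ) (1/2),
      StrictAnti (fun n : ℕ => g^[n] x) ∧
      Tendsto (fun n : ℕ => g^[n] x) atTop (nhds 0)) ∧
    (∀ x ∈ Set.Ioo (1/2 : ℝ) 1,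
      StrictMono (fun n : ℕ => g^[n] x) ∧
      Tendsto (fun n : ℕ => g^[n] x) atTop (nhds 1)) ∧
    (∀ n : ℕ, g^[n] (1/2 : ℝ) = 1/2) ∧
    (∀ x ∈ Set.Icc (0:ℝ) 1,
      Tendsto (fun n : ℕ => g^[n] x) atTop
        (nhds (if x < 1/2 then 0 else if x = 1/2 then 1/2 else 1))) := by
  have hhalf (n : ℕ) : g^[n] (1 / 2 : ℝ) = 1 / 2 := Function.iterate_fixed g_half n
  have hone : g 1 = 1 := by simpa [g_zero] using g_one_sub 0
  refine ⟨fun x hx => ⟨strictAnti_g_iterate hx, tendsto_g_iterate_zero hx⟩,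
    fun x hx => ⟨strictMono_g_iterate hx, tendsto_g_iterate_one hx⟩, hhalf, ?_⟩
  rintro x ⟨h0, h1⟩
  rcases lt_trichotomy x (1 / 2) with h | rfl | h
  · rw [if_pos h]
    rcases h0.eq_or_lt with rfl | h0
    · simp only [Function.iterate_fixed g_zero]
      exact tendsto_const_nhds
    · exact tendsto_g_iterate_zero ⟨h0, h⟩
  · rw [if_neg (lt_irrefl _), if_pos rfl]
    simp only [hhalf]
    exact tendsto_const_nhds
  · rw [if_neg h.not_gt, if_neg h.ne']
    rcases h1.eq_or_lt with rfl | h1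
    · simp only [Function.iterate_fixed hone]
      exact tendsto_const_nhds
    · exact tendsto_g_iterate_one ⟨h, h1⟩
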